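/- arXiv:1911.04718 — 3 statements merged into one kernel-verified Lean document; each statement's English description precedes it below -/
import Mathlib

section
/- Let f : ℝ/ℤ → [0,1] be an integrable Borel function with f ≢ 0 and f ≢ 1 (neither f = 0 almost everywhere nor f = 1 almost everywhere). Then for every integer ℓ ≥ 1, the ψ-function of the stationary determinantal measure μ_f satisfies ψ_{μ_f}(ℓ) ≥ 1 − exp( −(1/(ℓ+1)) · Σ_{n=ℓ+1}^∞ n·|f̂(n)|² ). -/
open MeasureTheory Filter Matrix
open scoped ENNReal

noncomputable def fhat (f : AddCircle (1:ℝ) → ℝ) (n : ℤ) : ℂ :=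
  fourierCoeff (fun t => (f t : ℂ)) n

/-- The stationary determinantal measure condition. -/
def IsDeterminantal (f : AddCircle (1:ℝ) → ℝ) (μ : Measure (ℤ → Bool)) : Prop :=
  ∀ s : Finset ℤ,
    ((μ {x | ∀ n ∈ s, x n = true}).toReal : ℂ) =
      Matrix.det (Matrix.of fun i j : s => fhat f ((i:ℤ) - (j:ℤ)))

/-- σ-algebra generated by the coordinates in S. -/
def coordSigma (S : Set ℤ) : MeasurableSpace (ℤ → Bool) :=
  MeasurableSpace.comap (fun x (n : S) => x (n : ℤ)) inferInstance

noncomputable def psi (μ : Measure (ℤ → Bool)) (ℓ : ℕ) : ℝ≥0∞ :=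
  ⨆ (A : Set (ℤ → Bool)) (_ : MeasurableSet[coordSigma {n : ℤ | n ≤ 0}] A) (_ : 0 < μ A)
    (B : Set (ℤ → Bool)) (_ : MeasurableSet[coordSigma {n : ℤ | (ℓ : ℤ) ≤ n}] B) (_ : 0 < μ B),
      ENNReal.ofReal |(μ (A ∩ B)).toReal / ((μ A).toReal * (μ B).toReal) - 1|

noncomputable def expNegE (x : ℝ≥0∞) : ℝ≥0∞ :=
  if x = ⊤ then 0 else ENNReal.ofReal (Real.exp (-x.toReal))

/-!
Let `A` be the event that the `N` sites of `(-N, 0]` are occupied and `B` the event that those of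
`[ℓ, ℓ + N)` are. Then `μ(A ∩ B)` is the determinant of a positive semidefinite block matrix whose
diagonal blocks `P` and `Q` have determinants `μ(A)` and `μ(B)`, with off-diagonal block `C`.
Taking a Schur complement and applying `x ≤ exp (x - 1)` to the eigenvalues of
`Q^(-1/2) (Q - Cᴴ P⁻¹ C) Q^(-1/2)` gives `μ(A ∩ B) ≤ μ(A) μ(B) exp (-tr (Q⁻¹ Cᴴ P⁻¹ C))`.
As `0 ≤ f ≤ 1`, both `P⁻¹` and `Q⁻¹` are at least `1`, so the trace is at least `∑ᵢⱼ |Cᵢⱼ|²`, in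
which `|f̂(ℓ + k)|²` occurs `k + 1` times for each `k < N`. Let `N → ∞`.
-/

section PosSemidef

open scoped ComplexOrder MatrixOrder

variable {𝕜 m n : Type*} [RCLike 𝕜] [Fintype m] [Fintype n]

open scoped Matrix.Norms.L2Operator in
lemma exists_eq_conjTranspose_mul_self {X : Matrix n n 𝕜} (hX : X.PosSemidef) :
    ∃ R : Matrix n n 𝕜, X = Rᴴ * R := by
  classical exact CStarAlgebra.nonneg_iff_eq_star_mul_self.1 hX.nonneg

lemma trace_mul_nonneg {X Y : Matrix n n 𝕜} (hX : X.PosSemidef) (hY : Y.PosSemidef) :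
    0 ≤ (X * Y).trace := by
  obtain ⟨R, rfl⟩ := exists_eq_conjTranspose_mul_self hX
  rw [Matrix.mul_assoc, trace_mul_comm]
  exact (hY.mul_mul_conjTranspose_same R).trace_nonneg

lemma re_trace_conjTranspose_mul_self (B : Matrix m n 𝕜) :
    RCLike.re (Bᴴ * B).trace = ∑ i, ∑ j, ‖B i j‖ ^ 2 := by
  have hentry (i j) : RCLike.re (star (B i j) * B i j) = ‖B i j‖ ^ 2 := by
    rw [← starRingEnd_apply, RCLike.conj_mul, ← RCLike.ofReal_pow, RCLike.ofReal_re]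
  rw [Finset.sum_comm]
  simp only [trace, diag_apply, mul_apply, conjTranspose_apply, map_sum, hentry]

variable [DecidableEq m] [DecidableEq n]

lemma one_le_nonsing_inv {P : Matrix n n 𝕜} (hP : P.PosDef) (hP1 : P ≤ 1) : 1 ≤ P⁻¹ := by
  have hu : IsUnit P.det := P.isUnit_iff_isUnit_det.1 hP.isUnit
  have hpsd : (1 - P).PosSemidef := le_iff.1 hP1
  have key : P⁻¹ - 1 = (1 - P) + (1 - P) * P⁻¹ * (1 - P)ᴴ := by
    rw [hpsd.isHermitian.eq]
    simp [Matrix.sub_mul, Matrix.mul_sub, mul_nonsing_inv _ hu, nonsing_inv_mul _ hu]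
  rw [le_iff, key]
  exact hpsd.add (hP.inv.posSemidef.mul_mul_conjTranspose_same _)

lemma re_det_le_exp_re_trace_sub_card {H : Matrix n n 𝕜} (hH : H.PosSemidef) :
    RCLike.re H.det ≤ Real.exp (RCLike.re H.trace - Fintype.card n) := by
  let ev := hH.isHermitian.eigenvalues
  have hdet : RCLike.re H.det = ∏ i, ev i := by
    rw [hH.isHermitian.det_eq_prod_eigenvalues, ← RCLike.ofReal_prod, RCLike.ofReal_re]
  have htrace : RCLike.re H.trace - Fintype.card n = ∑ i, (ev i - 1) := by
    rw [hH.isHermitian.trace_eq_sum_eigenvalues, ← RCLike.ofReal_sum, RCLike.ofReal_re]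
    simp [ev]
  rw [hdet, htrace, Real.exp_sum]
  exact Finset.prod_le_prod (fun i _ => hH.eigenvalues_nonneg i) fun i _ => by
    simpa using Real.add_one_le_exp (ev i - 1)

lemma re_det_pos {P : Matrix n n 𝕜} (hP : P.PosDef) : 0 < RCLike.re P.det :=
  (RCLike.pos_iff.1 hP.det_pos).1

lemma re_det_mul {P : Matrix n n 𝕜} (hP : P.PosDef) (z : 𝕜) :
    RCLike.re (P.det * z) = RCLike.re P.det * RCLike.re z := by
  simp [RCLike.mul_re, (RCLike.pos_iff.1 hP.det_pos).2]

lemma re_det_sub_le_mul_exp_neg_re_trace {P C : Matrix n n 𝕜} (hP : P.PosDef)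
    (hPC : (P - C).PosSemidef) :
    RCLike.re (P - C).det ≤ RCLike.re P.det * Real.exp (-RCLike.re (P⁻¹ * C).trace) := by
  have hu : IsUnit P.det := P.isUnit_iff_isUnit_det.1 hP.isUnit
  obtain ⟨R, hR⟩ := exists_eq_conjTranspose_mul_self hP.inv.posSemidef
  have hdet : (P - C).det = P.det * (R * (P - C) * Rᴴ).det := by
    rw [det_mul_right_comm, det_mul, det_mul_comm, ← hR, ← mul_assoc, ← det_mul,
      mul_nonsing_inv _ hu, det_one, one_mul]
  have htrace : (R * (P - C) * Rᴴ).trace = Fintype.card n - (P⁻¹ * C).trace := by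
    rw [trace_mul_comm, ← Matrix.mul_assoc, ← hR, Matrix.mul_sub, nonsing_inv_mul _ hu, trace_sub,
      trace_one]
  rw [hdet, re_det_mul hP]
  refine mul_le_mul_of_nonneg_left ?_ (re_det_pos hP).le
  simpa [htrace] using re_det_le_exp_re_trace_sub_card (hPC.mul_mul_conjTranspose_same R)

lemma re_det_fromBlocks_le {A : Matrix m m 𝕜} {B : Matrix m n 𝕜} {D : Matrix n n 𝕜}
    (hA : A.PosDef) (hD : D.PosDef) (hM : (fromBlocks A B Bᴴ D).PosSemidef) :
    RCLike.re (fromBlocks A B Bᴴ D).det ≤ RCLike.re A.det * RCLike.re D.det *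
      Real.exp (-RCLike.re (D⁻¹ * (Bᴴ * A⁻¹ * B)).trace) := by
  have : Invertible A := hA.isUnit.invertible
  have hSchur : (D - Bᴴ * A⁻¹ * B).PosSemidef := (PosDef.fromBlocks₁₁ B D hA).1 hM
  rw [det_fromBlocks₁₁, invOf_eq_nonsing_inv, re_det_mul hA, mul_assoc]
  exact mul_le_mul_of_nonneg_left (re_det_sub_le_mul_exp_neg_re_trace hD hSchur) (re_det_pos hA).le

lemma trace_conjTranspose_mul_self_le {A : Matrix m m 𝕜} {D : Matrix n n 𝕜} (B : Matrix m n 𝕜)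
    (hA : A.PosDef) (hA1 : A ≤ 1) (hD : D.PosDef) (hD1 : D ≤ 1) :
    (Bᴴ * B).trace ≤ (D⁻¹ * (Bᴴ * A⁻¹ * B)).trace := by
  have hA_gap : 0 ≤ (Bᴴ * (A⁻¹ - 1) * B).trace :=
    ((le_iff.1 (one_le_nonsing_inv hA hA1)).conjTranspose_mul_mul_same B).trace_nonneg
  have hD_gap : 0 ≤ ((D⁻¹ - 1) * (Bᴴ * A⁻¹ * B)).trace :=
    trace_mul_nonneg (le_iff.1 (one_le_nonsing_inv hD hD1))
      (hA.inv.posSemidef.conjTranspose_mul_mul_same B)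
  simp only [Matrix.mul_sub, Matrix.sub_mul, Matrix.mul_one, Matrix.one_mul, trace_sub,
    sub_nonneg] at hA_gap hD_gap
  exact hA_gap.trans hD_gap

lemma re_det_fromBlocks_le_of_le_one {A : Matrix m m 𝕜} {B : Matrix m n 𝕜} {D : Matrix n n 𝕜}
    (hA : A.PosDef) (hA1 : A ≤ 1) (hD : D.PosDef) (hD1 : D ≤ 1)
    (hM : (fromBlocks A B Bᴴ D).PosSemidef) :
    RCLike.re (fromBlocks A B Bᴴ D).det ≤ RCLike.re A.det * RCLike.re D.det *
      Real.exp (-∑ i, ∑ j, ‖B i j‖ ^ 2) := by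
  refine (re_det_fromBlocks_le hA hD hM).trans ?_
  have hdet := mul_pos (re_det_pos hA) (re_det_pos hD)
  rw [← re_trace_conjTranspose_mul_self]
  refine mul_le_mul_of_nonneg_left (Real.exp_le_exp.2 (neg_le_neg ?_)) hdet.le
  exact (RCLike.le_iff_re_im.1 (trace_conjTranspose_mul_self_le B hA hA1 hD hD1)).1

end PosSemidef

section TrigPoly

variable {T : ℝ} {ι : Type*} [Fintype ι]

/-- The trigonometric polynomial `∑ⱼ vⱼ exp(2πi eⱼ t / T)` with coefficients `v` at the frequencies
`e`, as a continuous function. It represents the quadratic form of a Toeplitz matrix as an integral;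
see `kernelMatrix`. -/
noncomputable def trigPoly (e : ι → ℤ) (v : ι → ℂ) : C(AddCircle T, ℂ) :=
  ∑ j, v j • fourier (e j)

lemma trigPoly_apply (e : ι → ℤ) (v : ι → ℂ) (t : AddCircle T) :
    trigPoly e v t = ∑ j, v j * fourier (e j) t := by
  simp [trigPoly]

lemma exists_polynomial_eval_toCircle_eq {e : ι → ℤ} (he : e.Injective) {v : ι → ℂ}
    (hv : v ≠ 0) :
    ∃ q : Polynomial ℂ, q ≠ 0 ∧ ∃ m : ℤ, ∀ t : AddCircle T,
      q.eval (AddCircle.toCircle t : ℂ) = fourier m t * trigPoly e v t := by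
  obtain ⟨m, hm⟩ := (Set.finite_range e).bddBelow
  have hdeg (j : ι) : ∃ d : ℕ, e j = m + d := Int.le.dest (hm ⟨j, rfl⟩) |>.imp fun _ => Eq.symm
  choose d hd using hdeg
  have hd_inj : d.Injective := fun i j hij => he (by rw [hd, hd, hij])
  refine ⟨∑ j, Polynomial.monomial (d j) (v j), fun hq => hv (funext fun i => ?_), -m, fun t => ?_⟩
  · classical
    simpa [Polynomial.coeff_monomial, hd_inj.eq_iff] using congrArg (Polynomial.coeff · (d i)) hq
  · have hshift (j : ι) :
        fourier (-m) t * fourier (e j) t = (AddCircle.toCircle t : ℂ) ^ d j := by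
      rw [← fourier_add, hd, neg_add_cancel_left, fourier_apply, natCast_zsmul,
        AddCircle.toCircle_nsmul, Circle.coe_pow]
    rw [Polynomial.eval_finsetSum, trigPoly_apply, Finset.mul_sum]
    refine Finset.sum_congr rfl fun j _ => ?_
    rw [Polynomial.eval_monomial, ← hshift]
    ring

variable [hT : Fact (0 < T)]

lemma finite_setOf_trigPoly_eq_zero {e : ι → ℤ} (he : e.Injective) {v : ι → ℂ} (hv : v ≠ 0) :
    {t : AddCircle T | trigPoly e v t = 0}.Finite := by
  obtain ⟨q, hq, m, hqeval⟩ := exists_polynomial_eval_toCircle_eq (T := T) he hv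
  have hinj : Function.Injective fun t : AddCircle T => (AddCircle.toCircle t : ℂ) :=
    Subtype.coe_injective.comp (AddCircle.injective_toCircle hT.out.ne')
  refine ((Polynomial.finite_setOfPred_isRoot hq).preimage hinj.injOn).subset fun t ht => ?_
  change q.eval _ = 0
  rw [hqeval, show trigPoly e v t = 0 from ht, mul_zero]

lemma volume_singleton_addCircle (x : AddCircle T) : volume {x} = 0 := by
  simpa [hT.out.le] using AddCircle.volume_closedBall T (x := x) 0

lemma ae_trigPoly_ne_zero {e : ι → ℤ} (he : e.Injective) {v : ι → ℂ} (hv : v ≠ 0) :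
    ∀ᵐ t : AddCircle T, trigPoly e v t ≠ 0 :=
  measure_eq_zero_iff_ae_notMem.1 <|
    (measure_null_iff_singleton (finite_setOf_trigPoly_eq_zero he hv).countable).2 fun x _ =>
      volume_singleton_addCircle x

end TrigPoly

lemma fhat_eq_integral (g : UnitAddCircle → ℝ) (n : ℤ) :
    fhat g n = ∫ t, fourier (-n) t * (g t : ℂ) := by
  simp [fhat, fourierCoeff, AddCircle.integral_haarAddCircle]

lemma integrable_fourier_mul {g : UnitAddCircle → ℝ} (hg : Integrable g) (n : ℤ) :
    Integrable fun t => fourier n t * (g t : ℂ) :=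
  hg.ofReal.bdd_mul (c := 1) (fourier n).continuous.aestronglyMeasurable
    (.of_forall fun _ => (Circle.norm_coe _).le)

lemma fhat_add {g h : UnitAddCircle → ℝ} (hg : Integrable g) (hh : Integrable h) (n : ℤ) :
    fhat (g + h) n = fhat g n + fhat h n := by
  simp only [fhat_eq_integral, Pi.add_apply, Complex.ofReal_add, mul_add]
  exact integral_add (integrable_fourier_mul hg _) (integrable_fourier_mul hh _)

lemma fhat_one (n : ℤ) : fhat 1 n = if n = 0 then 1 else 0 := by
  have hone : (fun t : UnitAddCircle => (((1 : UnitAddCircle → ℝ) t : ℝ) : ℂ)) =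
      fourier 0 := by
    ext; simp
  rw [fhat, hone, fourierCoeff_fourier, Pi.single_apply]

lemma star_fhat (g : UnitAddCircle → ℝ) (n : ℤ) : star (fhat g n) = fhat g (-n) := by
  simp only [fhat_eq_integral, fourier_neg, ← starRingEnd_apply, ← integral_conj, map_mul,
    Complex.conj_conj, Complex.conj_ofReal, neg_neg]

section KernelMatrix

open scoped ComplexOrder MatrixOrder

variable {g h : UnitAddCircle → ℝ} {ι κ : Type*} {e : ι → ℤ}

/-- The compression of the determinantal kernel `K_g(n, m) = ĝ(n - m)` to the sites `e i`. Sites are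
a family rather than a subset of `ℤ`, so that a union of two windows is a `Sum.elim` and its matrix
a block matrix. -/
noncomputable def kernelMatrix (g : UnitAddCircle → ℝ) (e : ι → ℤ) : Matrix ι ι ℂ :=
  Matrix.of fun i j => fhat g (e i - e j)

lemma kernelMatrix_isHermitian (g : UnitAddCircle → ℝ) (e : ι → ℤ) :
    (kernelMatrix g e).IsHermitian := by
  ext i j
  simp [kernelMatrix, star_fhat]

lemma kernelMatrix_add (hg : Integrable g) (hh : Integrable h) (e : ι → ℤ) :
    kernelMatrix (g + h) e = kernelMatrix g e + kernelMatrix h e := by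
  ext i j
  exact fhat_add hg hh _

lemma kernelMatrix_one [DecidableEq ι] (he : e.Injective) : kernelMatrix 1 e = 1 := by
  ext i j
  simp [kernelMatrix, fhat_one, one_apply, sub_eq_zero, he.eq_iff]

lemma kernelMatrix_sumElim (g : UnitAddCircle → ℝ) (e : ι → ℤ) (e' : κ → ℤ) :
    kernelMatrix g (Sum.elim e e') =
      fromBlocks (kernelMatrix g e) (of fun i j => fhat g (e i - e' j))
        (of fun i j => fhat g (e i - e' j))ᴴ (kernelMatrix g e') := by
  ext (i | i) (j | j) <;> simp [kernelMatrix, star_fhat]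

lemma star_dotProduct_kernelMatrix_mulVec [Fintype ι] (hg : Integrable g) (e : ι → ℤ)
    (v : ι → ℂ) :
    star v ⬝ᵥ (kernelMatrix g e *ᵥ v) = ((∫ t, g t * ‖trigPoly e v t‖ ^ 2 : ℝ) : ℂ) := by
  have hexpand (t : UnitAddCircle) : ((g t * ‖trigPoly e v t‖ ^ 2 : ℝ) : ℂ) =
      ∑ i, ∑ j, star (v i) * v j * (fourier (-(e i - e j)) t * (g t : ℂ)) := by
    push_cast
    rw [← Complex.conj_mul', trigPoly_apply, map_sum, Finset.sum_mul_sum, Finset.mul_sum]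
    simp_rw [Finset.mul_sum, neg_sub, sub_eq_neg_add, fourier_add, fourier_neg, map_mul,
      starRingEnd_apply]
    refine Finset.sum_congr rfl fun i _ => Finset.sum_congr rfl fun j _ => ?_
    ring
  have hterm (i j : ι) := (integrable_fourier_mul hg (-(e i - e j))).const_mul (star (v i) * v j)
  simp_rw [← integral_complex_ofReal, hexpand]
  rw [integral_finsetSum _ fun i _ => integrable_finsetSum _ fun j _ => hterm i j]
  simp_rw [integral_finsetSum _ fun j _ => hterm _ j, integral_const_mul, ← fhat_eq_integral,
    dotProduct, mulVec, dotProduct, Finset.mul_sum, kernelMatrix, of_apply, Pi.star_apply]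
  refine Finset.sum_congr rfl fun i _ => Finset.sum_congr rfl fun j _ => ?_
  ring

lemma integrable_mul_norm_trigPoly_sq [Fintype ι] (hg : Integrable g) (e : ι → ℤ) (v : ι → ℂ) :
    Integrable fun t => g t * ‖trigPoly e v t‖ ^ 2 :=
  hg.mul_bdd (c := ‖trigPoly e v‖ ^ 2) ((trigPoly e v).continuous.norm.pow 2).aestronglyMeasurable
    (.of_forall fun t => by
      simpa using pow_le_pow_left₀ (norm_nonneg _) ((trigPoly e v).norm_coe_le_norm t) 2)

variable [Finite ι]

lemma kernelMatrix_posSemidef (hg : Integrable g) (hg0 : 0 ≤ᵐ[volume] g) (e : ι → ℤ) :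
    (kernelMatrix g e).PosSemidef := by
  have := Fintype.ofFinite ι
  refine .of_dotProduct_mulVec_nonneg (kernelMatrix_isHermitian g e) fun v => ?_
  rw [star_dotProduct_kernelMatrix_mulVec hg, Complex.zero_le_real]
  exact integral_nonneg_of_ae (hg0.mono fun t ht => mul_nonneg ht (by positivity))

lemma kernelMatrix_posDef (hg : Integrable g) (hg0 : 0 ≤ᵐ[volume] g)
    (hne : ¬ g =ᵐ[volume] 0) (he : e.Injective) : (kernelMatrix g e).PosDef := by
  have := Fintype.ofFinite ι
  refine .of_dotProduct_mulVec_pos (kernelMatrix_isHermitian g e) fun v hv => ?_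
  have hnonneg : 0 ≤ᵐ[volume] fun t => g t * ‖trigPoly e v t‖ ^ 2 :=
    hg0.mono fun t ht => mul_nonneg ht (by positivity)
  rw [star_dotProduct_kernelMatrix_mulVec hg, Complex.zero_lt_real]
  refine (integral_nonneg_of_ae hnonneg).lt_of_ne' fun hzero => hne ?_
  filter_upwards [(integral_eq_zero_iff_of_nonneg_ae hnonneg
    (integrable_mul_norm_trigPoly_sq hg e v)).1 hzero, ae_trigPoly_ne_zero he hv] with t ht hpt
  simpa [hpt] using ht

lemma kernelMatrix_le_one [DecidableEq ι] (hg : Integrable g) (hg1 : g ≤ᵐ[volume] 1)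
    (he : e.Injective) : kernelMatrix g e ≤ 1 := by
  have hcompl : Integrable (1 - g) := (integrable_const 1).sub hg
  have hadd : kernelMatrix g e + kernelMatrix (1 - g) e = 1 := by
    rw [← kernelMatrix_add hg hcompl, add_sub_cancel, kernelMatrix_one he]
  rw [le_iff, ← hadd, add_sub_cancel_left]
  exact kernelMatrix_posSemidef hcompl (hg1.mono fun t ht => sub_nonneg.2 ht) e

end KernelMatrix

section Determinantal

/-- The cylinder event that all the sites `e i` are occupied, i.e. carry the value `true`; its
probability under a determinantal measure is a minor of the kernel. -/
def occupied {ι : Type*} (e : ι → ℤ) : Set (ℤ → Bool) :=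
  {x | ∀ i, x (e i) = true}

variable {f : UnitAddCircle → ℝ} {μ : Measure (ℤ → Bool)} {ι κ : Type*} {e : ι → ℤ} {e' : κ → ℤ}

lemma occupied_sumElim (e : ι → ℤ) (e' : κ → ℤ) :
    occupied (Sum.elim e e') = occupied e ∩ occupied e' := by
  ext x
  simp [occupied]

lemma measurableSet_occupied [Countable ι] {S : Set ℤ} (heS : ∀ i, e i ∈ S) :
    MeasurableSet[coordSigma S] (occupied e) := by
  refine ⟨⋂ i, (fun y : S → Bool => y ⟨e i, heS i⟩) ⁻¹' {true}, ?_, ?_⟩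
  · exact .iInter fun i => measurable_pi_apply _ (MeasurableSet.singleton _)
  · ext x
    simp [occupied]

lemma ofReal_one_sub_div_le_psi {ℓ : ℕ} {A B : Set (ℤ → Bool)}
    (hA : MeasurableSet[coordSigma {n | n ≤ 0}] A)
    (hB : MeasurableSet[coordSigma {n | (ℓ : ℤ) ≤ n}] B)
    (hμA : 0 < μ.real A) (hμB : 0 < μ.real B) :
    ENNReal.ofReal (1 - μ.real (A ∩ B) / (μ.real A * μ.real B)) ≤ psi μ ℓ := by
  calc ENNReal.ofReal (1 - μ.real (A ∩ B) / (μ.real A * μ.real B))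
    _ ≤ ENNReal.ofReal |μ.real (A ∩ B) / (μ.real A * μ.real B) - 1| := by
      rw [abs_sub_comm]
      exact ENNReal.ofReal_le_ofReal (le_abs_self _)
    _ ≤ psi μ ℓ :=
      le_iSup₂_of_le A hA <| le_iSup₂_of_le (ENNReal.toReal_pos_iff.1 hμA).1 B <|
        le_iSup₂_of_le hB (ENNReal.toReal_pos_iff.1 hμB).1 le_rfl

namespace IsDeterminantal

lemma real_occupied [Fintype ι] [DecidableEq ι] (hdet : IsDeterminantal f μ) (he : e.Injective) :
    μ.real (occupied e) = (kernelMatrix f e).det.re := by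
  let s : Finset ℤ := Finset.univ.image e
  let φ : ι ≃ s := (Equiv.ofInjective e he).trans (Equiv.subtypeEquivRight (by simp [s]))
  have hocc : occupied e = {x | ∀ n ∈ s, x n = true} := by
    ext x
    simp [occupied, s]
  have hker : kernelMatrix f e = (kernelMatrix f ((↑) : s → ℤ)).submatrix φ φ := rfl
  rw [hocc, hker, det_submatrix_equiv_self, measureReal_def]
  exact congrArg Complex.re (hdet s)

lemma real_occupied_pos [Finite ι] (hdet : IsDeterminantal f μ) (hf : Integrable f)
    (hf0 : 0 ≤ᵐ[volume] f) (hne : ¬ f =ᵐ[volume] 0) (he : e.Injective) :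
    0 < μ.real (occupied e) := by
  classical
  have := Fintype.ofFinite ι
  rw [hdet.real_occupied he]
  exact re_det_pos (kernelMatrix_posDef hf hf0 hne he)

variable [Fintype ι] [Fintype κ]

lemma real_occupied_inter_le (hdet : IsDeterminantal f μ) (hf : Integrable f)
    (hf0 : 0 ≤ᵐ[volume] f) (hf1 : f ≤ᵐ[volume] 1) (hne : ¬ f =ᵐ[volume] 0)
    (he : e.Injective) (he' : e'.Injective) (hee' : ∀ i j, e i ≠ e' j) :
    μ.real (occupied e ∩ occupied e') ≤ μ.real (occupied e) * μ.real (occupied e') *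
      Real.exp (-∑ i, ∑ j, ‖fhat f (e i - e' j)‖ ^ 2) := by
  classical
  rw [← occupied_sumElim, hdet.real_occupied (he.sumElim he' hee'), hdet.real_occupied he,
    hdet.real_occupied he', kernelMatrix_sumElim]
  refine re_det_fromBlocks_le_of_le_one (kernelMatrix_posDef hf hf0 hne he)
    (kernelMatrix_le_one hf hf1 he) (kernelMatrix_posDef hf hf0 hne he')
    (kernelMatrix_le_one hf hf1 he') ?_
  rw [← kernelMatrix_sumElim]
  exact kernelMatrix_posSemidef hf hf0 _

lemma ofReal_one_sub_exp_le_psi (hdet : IsDeterminantal f μ) (hf : Integrable f)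
    (hf0 : 0 ≤ᵐ[volume] f) (hf1 : f ≤ᵐ[volume] 1) (hne : ¬ f =ᵐ[volume] 0) {ℓ : ℕ} (hℓ : 1 ≤ ℓ)
    (he : e.Injective) (he' : e'.Injective) (he_past : ∀ i, e i ≤ 0) (he_future : ∀ j, ℓ ≤ e' j) :
    ENNReal.ofReal (1 - Real.exp (-∑ i, ∑ j, ‖fhat f (e' j - e i)‖ ^ 2)) ≤ psi μ ℓ := by
  have hpos := hdet.real_occupied_pos hf hf0 hne he
  have hpos' := hdet.real_occupied_pos hf hf0 hne he'
  have hdisj (j : κ) (i : ι) : e' j ≠ e i := by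
    have := he_past i
    have := he_future j
    omega
  refine (ENNReal.ofReal_le_ofReal (sub_le_sub_left ?_ 1)).trans <| ofReal_one_sub_div_le_psi
    (measurableSet_occupied he_past) (measurableSet_occupied he_future) hpos hpos'
  rw [div_le_iff₀' (mul_pos hpos hpos'), Set.inter_comm, mul_comm (μ.real (occupied e)),
    Finset.sum_comm]
  exact hdet.real_occupied_inter_le hf hf0 hf1 hne he' he hdisj

end IsDeterminantal

end Determinantal

lemma expNegE_eq_exp_neg (x : ℝ≥0∞) : expNegE x = EReal.exp (-(x : EReal)) := by
  induction x with
  | top => simp [expNegE]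
  | coe r =>
    change _ = EReal.exp ((-(r : ℝ) : ℝ) : EReal)
    simp only [EReal.exp_coe, expNegE, ENNReal.coe_ne_top, if_false, ENNReal.coe_toReal]

lemma antitone_expNegE : Antitone expNegE := fun x y hxy => by
  simpa [expNegE_eq_exp_neg] using hxy

lemma continuous_expNegE : Continuous expNegE := by
  simp_rw [funext expNegE_eq_exp_neg]
  exact ENNReal.continuous_exp.comp (continuous_neg.comp continuous_coe_ennreal_ereal)

lemma one_sub_expNegE_ofReal {x : ℝ} (hx : 0 ≤ x) :
    1 - expNegE (ENNReal.ofReal x) = ENNReal.ofReal (1 - Real.exp (-x)) := by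
  rw [expNegE, if_neg ENNReal.ofReal_ne_top, ENNReal.toReal_ofReal hx,
    ENNReal.ofReal_sub _ (Real.exp_pos _).le, ENNReal.ofReal_one]

lemma one_sub_expNegE_tsum_ofReal_le {a : ℕ → ℝ} (ha : ∀ k, 0 ≤ a k) {p : ℝ≥0∞}
    (h : ∀ N, ENNReal.ofReal (1 - Real.exp (-∑ k ∈ Finset.range N, a k)) ≤ p) :
    1 - expNegE (∑' k, ENNReal.ofReal (a k)) ≤ p := by
  have hcont : Continuous fun x => 1 - expNegE x :=
    (ENNReal.continuous_sub_left ENNReal.one_ne_top).comp continuous_expNegE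
  refine le_of_tendsto' ((hcont.tendsto _).comp (ENNReal.tendsto_nat_tsum _)) fun N => ?_
  rw [Function.comp_apply, ← ENNReal.ofReal_sum_of_nonneg fun k _ => ha k,
    one_sub_expNegE_ofReal (Finset.sum_nonneg fun k _ => ha k)]
  exact h N

lemma sum_range_succ_mul_le_sum_sum {F : ℕ → ℝ} (hF : ∀ n, 0 ≤ F n) (N : ℕ) :
    ∑ k ∈ Finset.range N, (k + 1 : ℝ) * F k ≤ ∑ i : Fin N, ∑ j : Fin N, F (i + j) := by
  calc ∑ k ∈ Finset.range N, (k + 1 : ℝ) * F k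
    _ = ∑ k ∈ Finset.range N, ∑ i ∈ Finset.range (k + 1), F (i + (k - i)) :=
      Finset.sum_congr rfl fun k _ => by
        rw [Finset.sum_congr rfl fun i hi =>
          congrArg F (Nat.add_sub_of_le (Nat.le_of_lt_succ (Finset.mem_range.1 hi)))]
        simp
    _ = ∑ i ∈ Finset.range N, ∑ j ∈ Finset.range (N - i), F (i + j) :=
      Finset.sum_range_diag_flip N fun i j => F (i + j)
    _ ≤ ∑ i ∈ Finset.range N, ∑ j ∈ Finset.range N, F (i + j) :=
      Finset.sum_le_sum fun i _ => Finset.sum_le_sum_of_subset_of_nonneg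
        (Finset.range_subset_range.2 (Nat.sub_le N i)) fun j _ _ => hF _
    _ = ∑ i : Fin N, ∑ j : Fin N, F (i + j) := by
      simp only [Finset.sum_range]

lemma tsum_ofReal_mul_div_le {F : ℕ → ℝ} (hF : ∀ n, 0 ≤ F n) (ℓ : ℕ) :
    (∑' n : ℕ, if ℓ + 1 ≤ n then ENNReal.ofReal (n * F n) else 0) / ((ℓ : ℝ≥0∞) + 1) ≤
      ∑' k : ℕ, ENNReal.ofReal ((k + 1) * F (ℓ + k)) := by
  have hsupp : (Function.support fun n : ℕ =>
      if ℓ + 1 ≤ n then ENNReal.ofReal (n * F n) else 0) ⊆ Set.range (ℓ + ·) := fun n hn =>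
    (Nat.exists_eq_add_of_le (Nat.le_of_succ_le (of_not_not fun h => hn (if_neg h)))).imp
      fun _ => Eq.symm
  have hcast : (ℓ : ℝ≥0∞) + 1 = ENNReal.ofReal (ℓ + 1) := by
    rw [ENNReal.ofReal_add (by positivity) zero_le_one, ENNReal.ofReal_natCast, ENNReal.ofReal_one]
  refine ENNReal.div_le_of_le_mul ?_
  rw [← (add_right_injective ℓ).tsum_eq hsupp, ← ENNReal.tsum_mul_right, hcast]
  refine ENNReal.tsum_le_tsum fun k => ?_
  split_ifs with h
  · rw [← ENNReal.ofReal_mul (mul_nonneg (by positivity) (hF _)), mul_right_comm]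
    refine ENNReal.ofReal_le_ofReal (mul_le_mul_of_nonneg_right ?_ (hF _))
    have : (0 : ℝ) ≤ k * ℓ := by positivity
    push_cast
    linarith
  · exact zero_le

theorem stmt0_general {f : UnitAddCircle → ℝ} (hint : Integrable f)
    (h0 : 0 ≤ᵐ[volume] f) (h1 : f ≤ᵐ[volume] 1) (hne0 : ¬ f =ᵐ[volume] 0)
    {μ : Measure (ℤ → Bool)} (hdet : IsDeterminantal f μ) {ℓ : ℕ} (hℓ : 1 ≤ ℓ) :
    1 - expNegE (∑' k : ℕ, ENNReal.ofReal ((k + 1) * ‖fhat f (ℓ + k : ℕ)‖ ^ 2)) ≤ psi μ ℓ := by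
  refine one_sub_expNegE_tsum_ofReal_le (fun k => by positivity) fun N => ?_
  let past (i : Fin N) : ℤ := -i
  let future (j : Fin N) : ℤ := ℓ + j
  have hpast : past.Injective := fun i j hij => by
    simpa [past, Fin.ext_iff] using hij
  have hfuture : future.Injective := fun i j hij => by
    simpa [future, Fin.ext_iff] using hij
  have hsum : ∑ k ∈ Finset.range N, (k + 1 : ℝ) * ‖fhat f (ℓ + k : ℕ)‖ ^ 2 ≤
      ∑ i, ∑ j, ‖fhat f (future j - past i)‖ ^ 2 := by
    convert sum_range_succ_mul_le_sum_sum (F := fun k => ‖fhat f (ℓ + k : ℕ)‖ ^ 2)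
      (fun _ => by positivity) N using 6 with i _ j
    simp only [future, past]
    push_cast
    ring
  calc ENNReal.ofReal (1 - Real.exp (-∑ k ∈ Finset.range N, (k + 1) * ‖fhat f (ℓ + k : ℕ)‖ ^ 2))
    _ ≤ ENNReal.ofReal (1 - Real.exp (-∑ i, ∑ j, ‖fhat f (future j - past i)‖ ^ 2)) := by
      gcongr
    _ ≤ psi μ ℓ := hdet.ofReal_one_sub_exp_le_psi hint h0 h1 hne0 hℓ hpast hfuture
      (fun i => by simp [past]) (fun j => by simp [future])

theorem stmt0 (f : AddCircle (1:ℝ) → ℝ) (hmeas : Measurable f)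
    (h0 : ∀ t, 0 ≤ f t) (h1 : ∀ t, f t ≤ 1) (hint : Integrable f)
    (hne0 : ¬ (∀ᵐ t : AddCircle (1:ℝ), f t = 0))
    (hne1 : ¬ (∀ᵐ t : AddCircle (1:ℝ), f t = 1))
    (μ : Measure (ℤ → Bool)) [IsProbabilityMeasure μ] (hdet : IsDeterminantal f μ)
    (ℓ : ℕ) (hℓ : 1 ≤ ℓ) :
    1 - expNegE ((∑' n : ℕ, if ℓ + 1 ≤ n then ENNReal.ofReal ((n : ℝ) * ‖fhat f n‖ ^ 2) else 0)
        / ((ℓ : ℝ≥0∞) + 1)) ≤ psi μ ℓ :=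
  (tsub_le_tsub_left (antitone_expNegE (tsum_ofReal_mul_div_le (fun _ => sq_nonneg _) ℓ)) 1).trans
    (stmt0_general hint (.of_forall h0) (.of_forall h1) hne0 hdet hℓ)
end

section
/- Let f : ℝ/ℤ → [0,1] be an integrable Borel function and let N, ℓ ≥ 1 be integers such that T_N(f) is invertible (hence 0 < T_N(f) ≤ I). Then det( I − T_N(f)^{−1} · Λ_{N,ℓ}(f)* · T_N(f)^{−1} · Λ_{N,ℓ}(f) ) ≤ exp( − ‖Λ_{N,ℓ}(f)‖_HS² ). -/
open MeasureTheory Matrix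
open scoped ComplexOrder

/-- The `N×N` Toeplitz matrix `T_N(f) = (f̂(i-j))_{1 ≤ i,j ≤ N}`. -/
noncomputable def Tmat (f : AddCircle (1:ℝ) → ℝ) (N : ℕ) : Matrix (Fin N) (Fin N) ℂ :=
  Matrix.of fun i j => fhat f (((i : ℕ) : ℤ) - ((j : ℕ) : ℤ))

/-- The `N×N` matrix `Λ_{N,ℓ}(f) = (f̂(i-(j+N+ℓ)))_{1 ≤ i,j ≤ N}`. -/
noncomputable def Lmat (f : AddCircle (1:ℝ) → ℝ) (N ℓ : ℕ) : Matrix (Fin N) (Fin N) ℂ :=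
  Matrix.of fun i j => fhat f (((i : ℕ) : ℤ) - (((j : ℕ) : ℤ) + (N : ℤ) + (ℓ : ℤ)))

/-- The squared Hilbert–Schmidt (Frobenius) norm `‖M‖_HS² = Σ_{i,j} |M_{ij}|²`. -/
noncomputable def frobSq {N : ℕ} (M : Matrix (Fin N) (Fin N) ℂ) : ℝ :=
  ∑ i, ∑ j, ‖M i j‖ ^ 2

/-!
The numbers `f̂(a i - a j)` form the Gram matrix of the exponentials `e_{a i}` in `L²(f dt)`, so for
`f ≥ 0` this matrix is positive semidefinite, and replacing `f` by `1 - f` shows that it is at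
most `1`. Let `A`, `B` be the matrices for frequencies `a`, `b`, and `L = (f̂(a i - b j))`.
The matrix for the frequencies `a` and `b` together is the block matrix `[A L; Lᴴ B]`,
so the Schur complement `S = B - Lᴴ A⁻¹ L` is positive semidefinite. Since
`x ≤ exp (x - 1)` for every eigenvalue `x` of `B^{-1/2} S B^{-1/2}`,
`det (1 - B⁻¹ Lᴴ A⁻¹ L) = det (B⁻¹ S) ≤ exp (tr (B⁻¹ S - 1)) = exp (-tr (B⁻¹ Lᴴ A⁻¹ L))`, and
`A⁻¹, B⁻¹ ≥ 1` bounds the last trace below by `tr (Lᴴ L)`.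
-/

section PosSemidef

variable {𝕜 m n : Type*} [RCLike 𝕜] [Fintype m] [Fintype n]

open scoped MatrixOrder in
lemma exists_eq_conjTranspose_mul_self_of_posSemidef {A : Matrix n n 𝕜} (hA : A.PosSemidef) :
    ∃ B : Matrix n n 𝕜, A = Bᴴ * B := by
  classical
  exact CStarAlgebra.nonneg_iff_eq_star_mul_self.mp hA.nonneg

lemma trace_mul_nonneg_of_posSemidef {A B : Matrix n n 𝕜} (hA : A.PosSemidef)
    (hB : B.PosSemidef) : 0 ≤ (A * B).trace := by
  obtain ⟨C, rfl⟩ := exists_eq_conjTranspose_mul_self_of_posSemidef hA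
  rw [← trace_mul_cycle]
  exact (hB.mul_mul_conjTranspose_same C).trace_nonneg

lemma trace_conjTranspose_mul_self_eq_sum_norm_sq (L : Matrix m n 𝕜) :
    (Lᴴ * L).trace = ((∑ i, ∑ j, ‖L i j‖ ^ 2 : ℝ) : 𝕜) := by
  rw [Finset.sum_comm]
  simp [trace, Matrix.mul_apply, RCLike.conj_mul]

variable [DecidableEq m] [DecidableEq n]

lemma posSemidef_inv_sub_one {A : Matrix n n 𝕜} (hA : A.PosDef) (hA_le : (1 - A).PosSemidef) :
    (A⁻¹ - 1).PosSemidef := by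
  have hdet : IsUnit A.det := (isUnit_iff_isUnit_det A).mp hA.isUnit
  have hsplit : A⁻¹ - 1 = (1 - A) + (1 - A) * A⁻¹ * (1 - A) := by
    simp [mul_sub, sub_mul, nonsing_inv_mul A hdet, mul_nonsing_inv A hdet]
  have hconj := hA.inv.posSemidef.conjTranspose_mul_mul_same (1 - A)
  rw [hA_le.isHermitian.eq] at hconj
  exact hsplit ▸ hA_le.add hconj

lemma det_le_exp_trace_of_posSemidef {A : Matrix n n 𝕜} (hA : A.PosSemidef) :
    A.det ≤ (Real.exp (RCLike.re A.trace - Fintype.card n) : 𝕜) := by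
  have hprod : ∏ i, hA.1.eigenvalues i ≤ Real.exp (∑ i, (hA.1.eigenvalues i - 1)) := by
    rw [Real.exp_sum]
    refine Finset.prod_le_prod (fun i _ => hA.eigenvalues_nonneg i) fun i _ => ?_
    linarith [Real.add_one_le_exp (hA.1.eigenvalues i - 1)]
  have htrace : RCLike.re A.trace - Fintype.card n = ∑ i, (hA.1.eigenvalues i - 1) := by
    simp [hA.1.trace_eq_sum_eigenvalues]
  rw [htrace, hA.1.det_eq_prod_eigenvalues]
  exact_mod_cast hprod

lemma det_mul_le_exp_trace_of_posSemidef {A B : Matrix n n 𝕜} (hA : A.PosSemidef)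
    (hB : B.PosSemidef) :
    (A * B).det ≤ (Real.exp (RCLike.re (A * B).trace - Fintype.card n) : 𝕜) := by
  obtain ⟨C, rfl⟩ := exists_eq_conjTranspose_mul_self_of_posSemidef hA
  have hdet : (Cᴴ * C * B).det = (C * B * Cᴴ).det := by
    simp only [det_mul]
    ring
  rw [hdet, ← trace_mul_cycle]
  exact det_le_exp_trace_of_posSemidef (hB.mul_mul_conjTranspose_same C)

lemma trace_conjTranspose_mul_self_le_s12 {A : Matrix m m 𝕜} {B : Matrix n n 𝕜} (L : Matrix m n 𝕜)
    (hA : (A - 1).PosSemidef) (hB : (B - 1).PosSemidef) :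
    (Lᴴ * L).trace ≤ (B * (Lᴴ * A * L)).trace := by
  have hA_nonneg : A.PosSemidef := by simpa using hA.add .one
  calc (Lᴴ * L).trace ≤ (Lᴴ * A * L).trace := by
        have h := (hA.conjTranspose_mul_mul_same L).trace_nonneg
        rwa [Matrix.mul_sub, Matrix.sub_mul, Matrix.mul_one, trace_sub, sub_nonneg] at h
    _ ≤ (B * (Lᴴ * A * L)).trace := by
        have h := trace_mul_nonneg_of_posSemidef hB (hA_nonneg.conjTranspose_mul_mul_same L)
        rwa [sub_mul, one_mul, trace_sub, sub_nonneg] at h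

theorem det_one_sub_le_exp_of_posSemidef_fromBlocks {A : Matrix m m 𝕜} {B : Matrix n n 𝕜}
    {L : Matrix m n 𝕜} (hA : A.PosDef) (hB : B.PosDef) (hA_le : (1 - A).PosSemidef)
    (hB_le : (1 - B).PosSemidef) (hblock : (fromBlocks A L Lᴴ B).PosSemidef) :
    (1 - B⁻¹ * Lᴴ * A⁻¹ * L).det ≤ (Real.exp (-∑ i, ∑ j, ‖L i j‖ ^ 2) : 𝕜) := by
  have := hA.isUnit.invertible
  have hschur : (B - Lᴴ * A⁻¹ * L).PosSemidef := (hA.fromBlocks₁₁ L B).mp hblock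
  have hfactor : 1 - B⁻¹ * Lᴴ * A⁻¹ * L = B⁻¹ * (B - Lᴴ * A⁻¹ * L) := by
    rw [mul_sub, nonsing_inv_mul B ((isUnit_iff_isUnit_det B).mp hB.isUnit)]
    simp only [Matrix.mul_assoc]
  have htrace : RCLike.re (B⁻¹ * (B - Lᴴ * A⁻¹ * L)).trace - Fintype.card n ≤
      -∑ i, ∑ j, ‖L i j‖ ^ 2 := by
    have hle := (RCLike.le_iff_re_im.mp <| trace_conjTranspose_mul_self_le_s12 L
      (posSemidef_inv_sub_one hA hA_le) (posSemidef_inv_sub_one hB hB_le)).1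
    rw [trace_conjTranspose_mul_self_eq_sum_norm_sq, RCLike.ofReal_re] at hle
    rw [← hfactor]
    simp only [trace_sub, trace_one, map_sub, RCLike.natCast_re, Matrix.mul_assoc] at hle ⊢
    linarith
  rw [hfactor]
  refine (det_mul_le_exp_trace_of_posSemidef hB.inv.posSemidef hschur).trans ?_
  exact_mod_cast Real.exp_le_exp.mpr htrace

end PosSemidef

section FourierCoeff

open AddCircle

variable {T : ℝ} [Fact (0 < T)] {f : AddCircle T → ℝ}

lemma fourierCoeff_one_sub {g : AddCircle T → ℂ} (hg : Integrable g haarAddCircle) (n : ℤ) :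
    fourierCoeff (1 - g) n = (if n = 0 then 1 else 0) - fourierCoeff g n := by
  have hone : fourierCoeff (1 : AddCircle T → ℂ) n = if n = 0 then 1 else 0 := by
    have hfourier : ⇑(fourier (T := T) 0) = 1 := funext fun _ => fourier_zero
    rw [← hfourier, fourierCoeff_fourier, Pi.single_apply]
  have hsub : Integrable (1 - g) haarAddCircle := (integrable_const 1).sub hg
  have hadd : fourierCoeff (1 - g) + fourierCoeff g = fourierCoeff (1 : AddCircle T → ℂ) := by
    rw [← fourierCoeff.add hsub hg, sub_add_cancel]
  rw [← hone, ← hadd, Pi.add_apply, add_sub_cancel_right]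

lemma star_fourierCoeff_ofReal (f : AddCircle T → ℝ) (n : ℤ) :
    star (fourierCoeff (fun t => (f t : ℂ)) n) = fourierCoeff (fun t => (f t : ℂ)) (-n) := by
  simp only [fourierCoeff, RCLike.star_def, ← integral_conj, smul_eq_mul, map_mul,
    Complex.conj_ofReal, ← fourier_neg]

variable {ι κ : Type*}

/-- The matrix `(f̂(a i - b j))_{i,j}` of Fourier coefficients of a real function `f` along
frequencies `a` and `b`. Consecutive integers `a = b` give a Toeplitz matrix; allowing arbitrary
frequencies covers its off-diagonal translates as well. -/
noncomputable def fourierCoeffMatrix (f : AddCircle T → ℝ) (a : ι → ℤ) (b : κ → ℤ) :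
    Matrix ι κ ℂ :=
  .of fun i j => fourierCoeff (fun t => (f t : ℂ)) (a i - b j)

lemma fourierCoeffMatrix_add_const (f : AddCircle T → ℝ) (a : ι → ℤ) (b : κ → ℤ) (c : ℤ) :
    fourierCoeffMatrix f (fun i => a i + c) (fun j => b j + c) = fourierCoeffMatrix f a b := by
  simp only [fourierCoeffMatrix, add_sub_add_right_eq_sub]

lemma conjTranspose_fourierCoeffMatrix (f : AddCircle T → ℝ) (a : ι → ℤ) (b : κ → ℤ) :
    (fourierCoeffMatrix f a b)ᴴ = fourierCoeffMatrix f b a := by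
  ext i j
  simp only [fourierCoeffMatrix, conjTranspose_apply, of_apply, star_fourierCoeff_ofReal, neg_sub]

lemma fourierCoeffMatrix_sumElim (f : AddCircle T → ℝ) (a : ι → ℤ) (b : κ → ℤ) :
    fourierCoeffMatrix f (Sum.elim a b) (Sum.elim a b) =
      fromBlocks (fourierCoeffMatrix f a a) (fourierCoeffMatrix f a b)
        (fourierCoeffMatrix f a b)ᴴ (fourierCoeffMatrix f b b) := by
  rw [conjTranspose_fourierCoeffMatrix]
  ext (i | i) (j | j) <;> rfl

lemma fourierCoeffMatrix_one_sub [DecidableEq ι] (hf : Integrable f haarAddCircle) {a : ι → ℤ}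
    (ha : a.Injective) :
    fourierCoeffMatrix (1 - f) a a = 1 - fourierCoeffMatrix f a a := by
  ext i j
  have h := fourierCoeff_one_sub hf.ofReal (a i - a j)
  simp only [sub_eq_zero, ha.eq_iff] at h
  simpa [fourierCoeffMatrix, one_apply, Pi.sub_def] using h

lemma injective_of_isUnit_det_fourierCoeffMatrix [Fintype ι] [DecidableEq ι] {a : ι → ℤ}
    (hdet : IsUnit (fourierCoeffMatrix f a a).det) : a.Injective := by
  intro i j hij
  by_contra hne
  refine hdet.ne_zero (det_zero_of_row_eq hne (funext fun k => ?_))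
  simp only [fourierCoeffMatrix, of_apply, hij]

lemma posSemidef_fourierCoeffMatrix [Finite ι]
    (hf : Integrable f haarAddCircle) (hf_nonneg : 0 ≤ᵐ[haarAddCircle] f) (a : ι → ℤ) :
    (fourierCoeffMatrix f a a).PosSemidef := by
  set μ := haarAddCircle.withDensity fun t : AddCircle T => ENNReal.ofReal (f t)
  have : IsFiniteMeasure μ := isFiniteMeasure_withDensity_ofReal hf.2
  have hgram : fourierCoeffMatrix f a a =
      gram ℂ fun i => ContinuousMap.toLp (E := ℂ) 2 μ ℂ (fourier (a i)) := by
    ext i j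
    rw [gram_apply, ContinuousMap.inner_toLp,
      integral_withDensity_eq_integral_toReal_smul₀ hf.aemeasurable.ennreal_ofReal
        (.of_forall fun _ => ENNReal.ofReal_lt_top)]
    refine integral_congr_ae (hf_nonneg.mono fun t ht => ?_)
    beta_reduce
    rw [ENNReal.toReal_ofReal ht, ← fourier_neg, ← fourier_add, neg_sub, sub_eq_add_neg,
      Complex.real_smul, smul_eq_mul, mul_comm]
  exact hgram ▸ posSemidef_gram _ _

lemma posSemidef_one_sub_fourierCoeffMatrix [Finite ι] [DecidableEq ι]
    (hf : Integrable f haarAddCircle) (hf_le : f ≤ᵐ[haarAddCircle] 1) {a : ι → ℤ}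
    (ha : a.Injective) :
    (1 - fourierCoeffMatrix f a a).PosSemidef := by
  rw [← fourierCoeffMatrix_one_sub hf ha]
  exact posSemidef_fourierCoeffMatrix ((integrable_const 1).sub hf)
    (hf_le.mono fun _ => sub_nonneg.mpr) a

theorem det_le_exp_general [Fintype ι] [DecidableEq ι] [Fintype κ] [DecidableEq κ]
    (hf : AEMeasurable f haarAddCircle) (hf_nonneg : 0 ≤ᵐ[haarAddCircle] f)
    (hf_le : f ≤ᵐ[haarAddCircle] 1) {a : ι → ℤ} {b : κ → ℤ}
    (ha : IsUnit (fourierCoeffMatrix f a a).det) (hb : IsUnit (fourierCoeffMatrix f b b).det) :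
    (1 - (fourierCoeffMatrix f b b)⁻¹ * (fourierCoeffMatrix f a b)ᴴ *
        (fourierCoeffMatrix f a a)⁻¹ * fourierCoeffMatrix f a b).det ≤
      (Real.exp (-∑ i, ∑ j, ‖fourierCoeffMatrix f a b i j‖ ^ 2) : ℂ) := by
  have hf_int : Integrable f haarAddCircle := .of_mem_Icc 0 1 hf (hf_nonneg.and hf_le)
  have hA := posSemidef_fourierCoeffMatrix hf_int hf_nonneg a
  have hB := posSemidef_fourierCoeffMatrix hf_int hf_nonneg b
  have hblock := posSemidef_fourierCoeffMatrix hf_int hf_nonneg (Sum.elim a b)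
  rw [fourierCoeffMatrix_sumElim] at hblock
  have hA_le := posSemidef_one_sub_fourierCoeffMatrix hf_int hf_le
    (injective_of_isUnit_det_fourierCoeffMatrix ha)
  have hB_le := posSemidef_one_sub_fourierCoeffMatrix hf_int hf_le
    (injective_of_isUnit_det_fourierCoeffMatrix hb)
  exact det_one_sub_le_exp_of_posSemidef_fromBlocks
    (hA.posDef_iff_det_ne_zero.mpr ha.ne_zero) (hB.posDef_iff_det_ne_zero.mpr hb.ne_zero)
    hA_le hB_le hblock

end FourierCoeff

lemma Tmat_eq_fourierCoeffMatrix (f : AddCircle (1 : ℝ) → ℝ) (N : ℕ) (c : ℤ) :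
    Tmat f N = fourierCoeffMatrix f (fun i : Fin N => (i : ℤ) + c) (fun j : Fin N => (j : ℤ) + c) :=
  (fourierCoeffMatrix_add_const f _ _ c).symm

lemma Lmat_eq_fourierCoeffMatrix (f : AddCircle (1 : ℝ) → ℝ) (N ℓ : ℕ) :
    Lmat f N ℓ = fourierCoeffMatrix f (fun i : Fin N => (i : ℤ))
      (fun j : Fin N => (j : ℤ) + (N + ℓ)) := by
  simp only [← add_assoc]
  rfl

/-- If `0 ≤ f ≤ 1` and `T_N(f)` is invertible, then
`det(I - T_N(f)⁻¹ Λ_{N,ℓ}(f)* T_N(f)⁻¹ Λ_{N,ℓ}(f)) ≤ exp(-‖Λ_{N,ℓ}(f)‖_HS²)`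
(the determinant is a real number; the inequality is in the complex order). -/
theorem det_le_exp
    (f : AddCircle (1:ℝ) → ℝ) (hmeas : Measurable f)
    (h0 : ∀ t, 0 ≤ f t) (h1 : ∀ t, f t ≤ 1) (hint : Integrable f)
    (N ℓ : ℕ) (hN : 1 ≤ N) (hℓ : 1 ≤ ℓ)
    (hinv : IsUnit (Tmat f N).det) :
    (1 - (Tmat f N)⁻¹ * (Lmat f N ℓ)ᴴ * (Tmat f N)⁻¹ * Lmat f N ℓ).det ≤
      (Real.exp (-(frobSq (Lmat f N ℓ))) : ℂ) := by
  have hT := Tmat_eq_fourierCoeffMatrix f N (N + ℓ)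
  have h := det_le_exp_general hmeas.aemeasurable (.of_forall h0) (.of_forall h1)
    (a := fun i : Fin N => (i : ℤ)) hinv (hT ▸ hinv)
  rwa [← hT, ← Lmat_eq_fourierCoeffMatrix] at h
end

section
/- Let f : ℝ/ℤ → [0,1] be a Borel function such that either f ≤ 1/2 almost everywhere or f ≥ 1/2 almost everywhere, and let q ≥ 2 be an integer. Then the sequence N ↦ S_N^{(q)}(f) is submultiplicative: for all integers M, N ≥ 1, S_{M+N}^{(q)}(f) ≤ S_M^{(q)}(f) · S_N^{(q)}(f). -/
open MeasureTheory Matrix Filter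

/-- A boolean seen as the complex number `0` or `1`. -/
def bc (b : Bool) : ℂ := if b then 1 else 0

/-- The cylinder weight `μ_f^+([ε]) = det(D_N(2ε-1)·T_N(f) + D_N(1-ε))`
(a real number, taken as the real part of the complex determinant). -/
noncomputable def cylWeight (f : AddCircle (1:ℝ) → ℝ) {N : ℕ} (ε : Fin N → Bool) : ℝ :=
  ((Matrix.diagonal (fun i => 2 * bc (ε i) - 1) * Tmat f N +
      Matrix.diagonal (fun i => 1 - bc (ε i))).det).re

/-- `S_N^{(q)}(f) = Σ_{ε ∈ {0,1}^N} det(D_N(2ε-1)·T_N(f) + D_N(1-ε))^q`. -/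
noncomputable def Sq (f : AddCircle (1:ℝ) → ℝ) (q N : ℕ) : ℝ :=
  ∑ ε : Fin N → Bool, (cylWeight f ε) ^ q

/-!
With `s = 2ε - 1` and `A = T(2f - 1)`, the weight of a cylinder of length `N` is
`2^{-N} det(1 + D(s)A)`. Changing `f` into `1 - f` replaces `A` by `-A` and only permutes the sign
vectors `s`, so `f ≥ 1/2` may be assumed, in which case `A` is positive semidefinite.

Expanding the determinant in the principal minors of `A` and summing the `q`-th powers over all
`s` gives a polynomial in these minors with nonnegative coefficients. By Fischer's inequality each
minor can only increase when the two off-diagonal blocks of `A` are set to zero, and for a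
block-diagonal matrix the sum factors.
-/

open AddCircle
open scoped ComplexOrder MatrixOrder

section Determinant

variable {m n R 𝕜 : Type*} [Fintype m] [DecidableEq m] [Fintype n] [DecidableEq n]
  [CommRing R] [RCLike 𝕜]

lemma det_one_add_diagonal_mul (d : n → R) (A : Matrix n n R) :
    (1 + diagonal d * A).det =
      ∑ S : Finset n, (∏ i ∈ S, d i) * (A.submatrix (Subtype.val : S → n) Subtype.val).det := by
  have rows_piecewise (S : Finset n) :
      S.piecewise (diagonal d * A).row (1 : Matrix n n R).row =
        S.piecewise (fun i => d i • S.piecewise A.row (1 : Matrix n n R).row i)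
          (S.piecewise A.row (1 : Matrix n n R).row) := by
    ext i j
    by_cases hi : i ∈ S <;> simp [hi, diagonal_mul]
  rw [add_comm]
  refine (detRowAlternating.map_add_univ (diagonal d * A).row (1 : Matrix n n R).row).trans
    (Finset.sum_congr rfl fun S _ => ?_)
  rw [rows_piecewise, ← AlternatingMap.coe_multilinearMap, MultilinearMap.map_piecewise_smul,
    smul_eq_mul, ← det_piecewise_one_eq_submatrix_det]
  rfl

lemma star_det_one_add_diagonal_mul [StarRing R] {d : n → R} (hd : star d = d)
    {A : Matrix n n R} (hA : A.IsHermitian) :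
    star (1 + diagonal d * A).det = (1 + diagonal d * A).det := by
  rw [← det_conjTranspose, conjTranspose_add, conjTranspose_one, conjTranspose_mul, hA.eq,
    diagonal_conjTranspose, hd, det_one_add_mul_comm]

lemma one_le_det_one_add_of_posSemidef {A : Matrix n n 𝕜} (hA : A.PosSemidef) :
    1 ≤ (1 + A).det := by
  have expansion := det_one_add_diagonal_mul (fun _ => (1 : 𝕜)) A
  simp only [diagonal_one, one_mul, Finset.prod_const_one] at expansion
  rw [expansion]
  calc 1 = (A.submatrix (Subtype.val : (∅ : Finset n) → n) Subtype.val).det := det_isEmpty.symm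
    _ ≤ _ := Finset.single_le_sum
      (f := fun S : Finset n => (A.submatrix (Subtype.val : S → n) Subtype.val).det)
      (fun S _ => (hA.submatrix Subtype.val).det_nonneg) (Finset.mem_univ ∅)

lemma det_le_det_add_of_posSemidef {A B : Matrix n n 𝕜} (hA : A.PosSemidef)
    (hB : B.PosSemidef) : A.det ≤ (A + B).det := by
  by_cases hdet : A.det = 0
  · exact hdet ▸ (hA.add hB).det_nonneg
  obtain ⟨C, rfl⟩ := CStarAlgebra.nonneg_iff_eq_star_mul_self.1 hB.nonneg
  rw [det_add_mul _ _ (isUnit_iff_ne_zero.2 hdet)]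
  exact le_mul_of_one_le_right hA.det_nonneg
    (one_le_det_one_add_of_posSemidef (hA.inv.mul_mul_conjTranspose_same C))

/-- **Fischer's inequality**: the determinant is `det A` times that of the Schur complement
`D - Bᴴ A⁻¹ B`, which lies below `D` in the Loewner order. -/
lemma det_fromBlocks_le_of_posSemidef {A : Matrix m m 𝕜} {B : Matrix m n 𝕜}
    {D : Matrix n n 𝕜} (h : (fromBlocks A B Bᴴ D).PosSemidef) :
    (fromBlocks A B Bᴴ D).det ≤ A.det * D.det := by
  have hA : A.PosSemidef := h.submatrix Sum.inl
  have hD : D.PosSemidef := h.submatrix Sum.inr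
  by_cases hdet : (fromBlocks A B Bᴴ D).det = 0
  · exact hdet ▸ mul_nonneg hA.det_nonneg hD.det_nonneg
  have hA_posDef : A.PosDef := (h.posDef_iff_det_ne_zero.2 hdet).submatrix Sum.inl_injective
  let _ : Invertible A := hA_posDef.isUnit.invertible
  have schur := (PosDef.fromBlocks₁₁ B D hA_posDef).1 h
  have schur_le := det_le_det_add_of_posSemidef schur (hA.inv.conjTranspose_mul_mul_same B)
  rw [sub_add_cancel] at schur_le
  rw [det_fromBlocks₁₁, invOf_eq_nonsing_inv]
  exact mul_le_mul_of_nonneg_left schur_le hA.det_nonneg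

lemma det_le_det_toSquareBlockProp_mul_of_posSemidef {A : Matrix n n 𝕜} (hA : A.PosSemidef)
    (p : n → Prop) [DecidablePred p] :
    A.det ≤ (A.toSquareBlockProp p).det * (A.toSquareBlockProp fun i => ¬p i).det := by
  have blocks : A.submatrix (Equiv.sumCompl p) (Equiv.sumCompl p) =
      fromBlocks (A.toSquareBlockProp p) (A.toBlock p fun i => ¬p i)
        (A.toBlock p fun i => ¬p i)ᴴ (A.toSquareBlockProp fun i => ¬p i) := by
    ext (i | i) (j | j) <;>
      simp [toSquareBlockProp_def, toBlock_apply, hA.isHermitian.apply]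
  rw [← det_submatrix_equiv_self (Equiv.sumCompl p) A, blocks]
  exact det_fromBlocks_le_of_posSemidef (blocks ▸ hA.submatrix (Equiv.sumCompl p))

lemma det_submatrix_le_det_submatrix_blockDiag {α β : Type*} {A : Matrix (α ⊕ β) (α ⊕ β) 𝕜}
    (hA : A.PosSemidef) (e : n → α ⊕ β) :
    (A.submatrix e e).det ≤
      ((fromBlocks A.toBlocks₁₁ 0 0 A.toBlocks₂₂).submatrix e e).det := by
  set B := fromBlocks A.toBlocks₁₁ 0 0 A.toBlocks₂₂
  let p (i : n) : Prop := (e i).isLeft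
  have left_blocks : (A.submatrix e e).toSquareBlockProp p =
      (B.submatrix e e).toSquareBlockProp p := by
    ext ⟨i, hi⟩ ⟨j, hj⟩
    obtain ⟨a, ha⟩ := Sum.isLeft_iff.1 hi
    obtain ⟨b, hb⟩ := Sum.isLeft_iff.1 hj
    simp [toSquareBlockProp_def, ha, hb, B, toBlocks₁₁]
  have right_blocks : (A.submatrix e e).toSquareBlockProp (fun i => ¬p i) =
      (B.submatrix e e).toSquareBlockProp fun i => ¬p i := by
    ext ⟨i, hi⟩ ⟨j, hj⟩
    obtain ⟨a, ha⟩ := Sum.isRight_iff.1 (Sum.not_isLeft.1 hi)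
    obtain ⟨b, hb⟩ := Sum.isRight_iff.1 (Sum.not_isLeft.1 hj)
    simp [toSquareBlockProp_def, ha, hb, B, toBlocks₂₂]
  have B_offDiag (i : n) (hi : ¬p i) (j : n) (hj : p j) : B.submatrix e e i j = 0 := by
    obtain ⟨a, ha⟩ := Sum.isRight_iff.1 (Sum.not_isLeft.1 hi)
    obtain ⟨b, hb⟩ := Sum.isLeft_iff.1 hj
    simp [ha, hb, B]
  rw [twoBlockTriangular_det _ p B_offDiag, ← left_blocks, ← right_blocks]
  exact det_le_det_toSquareBlockProp_mul_of_posSemidef (hA.submatrix e) p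

end Determinant

section Signs

variable {ι κ R : Type*} [Fintype ι] [DecidableEq ι] [Fintype κ] [CommRing R]
  [PartialOrder R] [IsOrderedRing R]

/-- The sum factors over `ι`: a sign occurring an even number of times contributes `2`, and a
sign occurring an odd number of times contributes `0`. -/
lemma sum_prod_signs_nonneg (S : κ → Finset ι) :
    0 ≤ ∑ s : ι → ℤˣ, ∏ k, ∏ i ∈ S k, ((s i : ℤ) : R) := by
  have factor (s : ι → ℤˣ) : ∏ k, ∏ i ∈ S k, ((s i : ℤ) : R) =
      ∏ i, ((s i : ℤ) : R) ^ Fintype.card {k // i ∈ S k} := by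
    simp_rw [← Fintype.prod_ite_mem (S _)]
    rw [Finset.prod_comm]
    refine Finset.prod_congr rfl fun i _ => ?_
    rw [Finset.prod_ite, Finset.prod_const, Finset.prod_const_one, mul_one,
      Fintype.card_subtype]
  simp_rw [factor]
  rw [← Fintype.prod_sum fun i (u : ℤˣ) => ((u : ℤ) : R) ^ Fintype.card {k // i ∈ S k}]
  refine Finset.prod_nonneg fun i _ => ?_
  rw [UnitsInt.univ, Finset.sum_pair (by decide)]
  rcases neg_one_pow_eq_or R (Fintype.card {k // i ∈ S k}) with h | h <;>
    simp [h, one_add_one_eq_two]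

lemma sum_signs_pow_le_sum_signs_pow {c d : Finset ι → R} (hc : 0 ≤ c) (hcd : c ≤ d) (q : ℕ) :
    ∑ s : ι → ℤˣ, (∑ S, (∏ i ∈ S, ((s i : ℤ) : R)) * c S) ^ q ≤
      ∑ s : ι → ℤˣ, (∑ S, (∏ i ∈ S, ((s i : ℤ) : R)) * d S) ^ q := by
  have expand (c : Finset ι → R) :
      ∑ s : ι → ℤˣ, (∑ S, (∏ i ∈ S, ((s i : ℤ) : R)) * c S) ^ q =
        ∑ S : Fin q → Finset ι,
          (∑ s : ι → ℤˣ, ∏ k, ∏ i ∈ S k, ((s i : ℤ) : R)) * ∏ k, c (S k) := by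
    simp_rw [Fintype.sum_pow, Finset.prod_mul_distrib, Finset.sum_mul]
    exact Finset.sum_comm
  rw [expand, expand]
  gcongr with S _ k
  · exact sum_prod_signs_nonneg S
  · exact fun k _ => hc (S k)
  · exact hcd (S k)

end Signs

section SignMoment

variable {m n R 𝕜 : Type*} [Fintype m] [DecidableEq m] [Fintype n] [DecidableEq n]
  [CommRing R] [RCLike 𝕜]

/-- The `q`-th moment `∑ₛ det(1 + D(s)A)^q` of a square matrix `A` over all vectors of signs
`s`. With `A = 2T - 1`, where `T` is the kernel of a determinantal measure, it is the sum of the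
`q`-th powers of the cylinder weights, up to normalization. -/
def signMoment (q : ℕ) (A : Matrix n n R) : R :=
  ∑ s : n → ℤˣ, (1 + diagonal (fun i => ((s i : ℤ) : R)) * A).det ^ q

lemma signMoment_neg (q : ℕ) (A : Matrix n n R) : signMoment q (-A) = signMoment q A :=
  Fintype.sum_equiv (Equiv.neg _) _ _ fun s => by
    simp [← diagonal_neg]

lemma signMoment_submatrix_equiv (q : ℕ) (e : m ≃ n) (A : Matrix n n R) :
    signMoment q (A.submatrix e e) = signMoment q A := by
  refine Fintype.sum_equiv (e.arrowCongr (Equiv.refl ℤˣ)) _ _ fun s => ?_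
  rw [← det_submatrix_equiv_self e (1 + _)]
  congr 2
  ext i j
  simp [diagonal_mul, one_apply]

lemma signMoment_fromBlocks_zero (q : ℕ) (A : Matrix m m R) (D : Matrix n n R) :
    signMoment q (fromBlocks A 0 0 D) = signMoment q A * signMoment q D := by
  rw [signMoment, signMoment, signMoment, Finset.sum_mul_sum, ← Fintype.sum_prod_type']
  refine Fintype.sum_equiv (Equiv.sumArrowEquivProdArrow m n ℤˣ) _ _ fun s => ?_
  have blocks : 1 + diagonal (fun i => ((s i : ℤ) : R)) * fromBlocks A 0 0 D =
      fromBlocks (1 + diagonal (fun i => ((s (Sum.inl i) : ℤ) : R)) * A) 0 0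
        (1 + diagonal (fun i => ((s (Sum.inr i) : ℤ) : R)) * D) := by
    ext (i | i) (j | j) <;> simp [diagonal_mul, one_apply]
  rw [blocks, det_fromBlocks_zero₂₁, mul_pow]
  rfl

lemma signMoment_le_mul_of_posSemidef (q : ℕ) {A : Matrix (m ⊕ n) (m ⊕ n) 𝕜}
    (hA : A.PosSemidef) :
    signMoment q A ≤ signMoment q A.toBlocks₁₁ * signMoment q A.toBlocks₂₂ := by
  rw [← signMoment_fromBlocks_zero]
  simp only [signMoment, det_one_add_diagonal_mul]
  exact sum_signs_pow_le_sum_signs_pow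
    (fun S => (hA.submatrix (Subtype.val : S → m ⊕ n)).det_nonneg)
    (fun S => det_submatrix_le_det_submatrix_blockDiag hA (Subtype.val : S → m ⊕ n)) q

end SignMoment

section Toeplitz

variable {f g : AddCircle (1 : ℝ) → ℝ}

lemma volume_eq_haarAddCircle : (volume : Measure (AddCircle (1 : ℝ))) = haarAddCircle := by
  rw [volume_eq_smul_haarAddCircle, ENNReal.ofReal_one, one_smul]

lemma Tmat_const_mul (c : ℝ) (f : AddCircle (1 : ℝ) → ℝ) (N : ℕ) :
    Tmat (fun t => c * f t) N = (c : ℂ) • Tmat f N := by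
  ext i j
  simp [Tmat, fhat, fourierCoeff.const_mul]

lemma Tmat_neg (f : AddCircle (1 : ℝ) → ℝ) (N : ℕ) : Tmat (-f) N = -Tmat f N := by
  simpa [Pi.neg_def] using Tmat_const_mul (-1) f N

lemma Tmat_sub (hf : Integrable f) (hg : Integrable g) (N : ℕ) :
    Tmat (fun t => f t - g t) N = Tmat f N - Tmat g N := by
  rw [volume_eq_haarAddCircle] at hf hg
  ext i j
  simp only [Tmat, fhat, fourierCoeff, of_apply, Matrix.sub_apply, Complex.ofReal_sub, smul_sub]
  exact integral_sub (hf.ofReal.fourier_smul _) (hg.ofReal.fourier_smul _)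

lemma Tmat_one (N : ℕ) : Tmat (fun _ => 1) N = 1 := by
  have coeff_one (k : ℤ) : fhat (fun _ => 1) k = if k = 0 then 1 else 0 := by
    simpa [fhat, Pi.single_apply, fourierCoeff] using
      congrFun (fourierCoeff_fourier (T := (1 : ℝ)) 0) k
  ext i j
  simp [Tmat, coeff_one, one_apply, sub_eq_zero, Fin.val_inj]

lemma isHermitian_Tmat (f : AddCircle (1 : ℝ) → ℝ) (N : ℕ) : (Tmat f N).IsHermitian := by
  ext i j
  simp only [conjTranspose_apply, Tmat, of_apply, fhat, fourierCoeff, smul_eq_mul]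
  rw [Complex.star_def, ← integral_conj]
  simp only [map_mul, Complex.conj_ofReal, ← fourier_neg, neg_sub]

lemma dotProduct_Tmat_mulVec (hf : Integrable f) {N : ℕ} (x : Fin N → ℂ) :
    star x ⬝ᵥ (Tmat f N *ᵥ x) =
      ∫ t, ((Complex.normSq (∑ j : Fin N, fourier j t * x j) * f t : ℝ) : ℂ)
        ∂haarAddCircle := by
  rw [volume_eq_haarAddCircle] at hf
  have integrable_term (i j : Fin N) : Integrable (fun t : AddCircle (1 : ℝ) =>
      star (x i) * (fourier (-((i : ℤ) - j)) t • (f t : ℂ) * x j)) haarAddCircle :=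
    ((hf.ofReal.fourier_smul _).mul_const _).const_mul _
  calc star x ⬝ᵥ (Tmat f N *ᵥ x)
      = ∑ i : Fin N, ∑ j : Fin N, ∫ t, star (x i) * (fourier (-((i : ℤ) - j)) t • (f t : ℂ) * x j)
          ∂haarAddCircle := by
        simp only [dotProduct, mulVec, Finset.mul_sum, integral_const_mul, integral_mul_const]
        rfl
    _ = ∫ t, ∑ i : Fin N, ∑ j : Fin N, star (x i) * (fourier (-((i : ℤ) - j)) t • (f t : ℂ) * x j)
          ∂haarAddCircle := by
        rw [integral_finsetSum _ fun i _ => integrable_finsetSum _ fun j _ => integrable_term i j]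
        exact Finset.sum_congr rfl fun i _ =>
          (integral_finsetSum _ fun j _ => integrable_term i j).symm
    _ = _ := by
        refine integral_congr_ae (ae_of_all _ fun t => ?_)
        simp only [Complex.ofReal_mul, Complex.normSq_eq_conj_mul_self, map_sum, map_mul,
          ← fourier_neg]
        simp_rw [Finset.sum_mul_sum, Finset.sum_mul]
        refine Finset.sum_congr rfl fun i _ => Finset.sum_congr rfl fun j _ => ?_
        rw [neg_sub, sub_eq_neg_add, fourier_add, Complex.star_def, smul_eq_mul]
        ring

lemma posSemidef_Tmat (hf : Integrable f) (hf0 : 0 ≤ᵐ[volume] f) (N : ℕ) :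
    (Tmat f N).PosSemidef := by
  refine .of_dotProduct_mulVec_nonneg (isHermitian_Tmat f N) fun x => ?_
  rw [dotProduct_Tmat_mulVec hf, integral_complex_ofReal, Complex.zero_le_real,
    ← volume_eq_haarAddCircle]
  exact integral_nonneg_of_ae (hf0.mono fun t ht => mul_nonneg (Complex.normSq_nonneg _) ht)

lemma toBlocks₁₁_Tmat_add (f : AddCircle (1 : ℝ) → ℝ) (M N : ℕ) :
    ((Tmat f (M + N)).submatrix finSumFinEquiv finSumFinEquiv).toBlocks₁₁ = Tmat f M := by
  ext i j
  simp [toBlocks₁₁, Tmat]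

lemma toBlocks₂₂_Tmat_add (f : AddCircle (1 : ℝ) → ℝ) (M N : ℕ) :
    ((Tmat f (M + N)).submatrix finSumFinEquiv finSumFinEquiv).toBlocks₂₂ = Tmat f N := by
  ext i j
  simp [toBlocks₂₂, Tmat]

lemma signMoment_Tmat_add_le (hf : Integrable f) (hf0 : 0 ≤ᵐ[volume] f) (q M N : ℕ) :
    signMoment q (Tmat f (M + N)) ≤ signMoment q (Tmat f M) * signMoment q (Tmat f N) := by
  have le_mul := signMoment_le_mul_of_posSemidef q
    ((posSemidef_Tmat hf hf0 (M + N)).submatrix (finSumFinEquiv (m := M)))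
  rwa [toBlocks₁₁_Tmat_add, toBlocks₂₂_Tmat_add, signMoment_submatrix_equiv] at le_mul

end Toeplitz

section Cylinder

variable {f : AddCircle (1 : ℝ) → ℝ}

/-- The bijection `b ↦ 2b - 1` from booleans to signs. -/
def boolEquivSign : Bool ≃ ℤˣ where
  toFun b := if b then 1 else -1
  invFun u := u = 1
  left_inv := by decide
  right_inv := by decide

lemma two_mul_bc_sub_one (b : Bool) : 2 * bc b - 1 = ((boolEquivSign b : ℤ) : ℂ) := by
  cases b <;> norm_num [bc, boolEquivSign]

lemma Tmat_two_mul_sub_one (hf : Integrable f) (N : ℕ) :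
    Tmat (fun t => 2 * f t - 1) N = (2 : ℂ) • Tmat f N - 1 := by
  rw [Tmat_sub (hf.const_mul 2) (integrable_const 1), Tmat_const_mul, Tmat_one,
    Complex.ofReal_ofNat]

lemma coe_cylWeight (hf : Integrable f) {N : ℕ} (ε : Fin N → Bool) :
    (cylWeight f ε : ℂ) = (1 / 2) ^ N *
      (1 + diagonal (fun i => ((boolEquivSign (ε i) : ℤ) : ℂ)) *
        Tmat (fun t => 2 * f t - 1) N).det := by
  set s : Fin N → ℂ := fun i => ((boolEquivSign (ε i) : ℤ) : ℂ) with hs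
  set A := Tmat (fun t => 2 * f t - 1) N with hA
  have center : diagonal (fun i => 2 * bc (ε i) - 1) * Tmat f N +
      diagonal (fun i => 1 - bc (ε i)) = (1 / 2 : ℂ) • (1 + diagonal s * A) := by
    rw [hA, Tmat_two_mul_sub_one hf]
    ext i j
    simp only [hs, ← two_mul_bc_sub_one, Matrix.add_apply, diagonal_mul, Matrix.smul_apply,
      Matrix.sub_apply, smul_eq_mul, diagonal_apply, one_apply]
    split_ifs <;> ring
  have det_real : star (1 + diagonal s * A).det = (1 + diagonal s * A).det :=
    star_det_one_add_diagonal_mul (by ext i; simp [hs]) (isHermitian_Tmat _ N)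
  rw [cylWeight, center, det_smul, Fintype.card_fin]
  refine Complex.conj_eq_iff_re.1 ?_
  rw [map_mul, ← Complex.star_def, det_real]
  simp

lemma coe_Sq (hf : Integrable f) (q N : ℕ) :
    (Sq f q N : ℂ) =
      (1 / 2) ^ (N * q) * signMoment q (Tmat (fun t => 2 * f t - 1) N) := by
  rw [Sq, Complex.ofReal_sum, signMoment, Finset.mul_sum]
  refine Fintype.sum_equiv ((Equiv.refl (Fin N)).arrowCongr boolEquivSign) _ _ fun ε => ?_
  rw [Complex.ofReal_pow, coe_cylWeight hf, mul_pow, pow_mul]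
  rfl

end Cylinder

theorem Sq_submultiplicative_general {f : AddCircle (1 : ℝ) → ℝ} (hf : Integrable f)
    (hhalf : (∀ᵐ t : AddCircle (1 : ℝ), f t ≤ 1 / 2) ∨ (∀ᵐ t : AddCircle (1 : ℝ), 1 / 2 ≤ f t))
    (q M N : ℕ) :
    Sq f q (M + N) ≤ Sq f q M * Sq f q N := by
  set g : AddCircle (1 : ℝ) → ℝ := fun t => 2 * f t - 1
  have hg : Integrable g := (hf.const_mul 2).sub (integrable_const 1)
  have moment_le : signMoment q (Tmat g (M + N)) ≤
      signMoment q (Tmat g M) * signMoment q (Tmat g N) := by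
    rcases hhalf with hle | hge
    · simpa only [Tmat_neg, signMoment_neg] using signMoment_Tmat_add_le hg.neg
        (hle.mono fun t ht => show 0 ≤ -(2 * f t - 1) by linarith) q M N
    · exact signMoment_Tmat_add_le hg
        (hge.mono fun t ht => show 0 ≤ 2 * f t - 1 by linarith) q M N
  rw [← Complex.real_le_real, Complex.ofReal_mul, coe_Sq hf, coe_Sq hf, coe_Sq hf, add_mul,
    pow_add, mul_mul_mul_comm]
  exact mul_le_mul_of_nonneg_left moment_le (by positivity)

/-- If `f ≤ 1/2` a.e. or `f ≥ 1/2` a.e., then `N ↦ S_N^{(q)}(f)` is submultiplicative. -/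
theorem Sq_submultiplicative
    (f : AddCircle (1:ℝ) → ℝ) (hmeas : Measurable f)
    (h0 : ∀ t, 0 ≤ f t) (h1 : ∀ t, f t ≤ 1)
    (hhalf : (∀ᵐ t : AddCircle (1:ℝ), f t ≤ 1 / 2) ∨
      (∀ᵐ t : AddCircle (1:ℝ), 1 / 2 ≤ f t))
    (q : ℕ) (hq : 2 ≤ q) (M N : ℕ) (hM : 1 ≤ M) (hN : 1 ≤ N) :
    Sq f q (M + N) ≤ Sq f q M * Sq f q N := by
  have hf : Integrable f := .of_bound hmeas.aestronglyMeasurable 1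
    (ae_of_all _ fun t => abs_le.2 ⟨by linarith [h0 t], h1 t⟩)
  exact Sq_submultiplicative_general hf hhalf q M N
end
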